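/- For a simple root α_j the following are equivalent: (a) α_j is minuscule, i.e., m_j = 1; (b) there exists φ ∈ O(V) with φ({−α₀} ∪ Π) = {−α₀} ∪ Π and φ(α_j) = −α₀. -/

import Mathlib

/-! If `m j = 1`, then replacing `α j` by `-α₀` in the base `α` gives another base `α'` of `Φ`: in a root
`∑ cᵢ αᵢ` the coefficient `c j` lies in `{-1, 0, 1}`, and rewriting it in terms of `α'` changes `c j`
into `-c j` and every other `cᵢ` into `cᵢ - c j * mᵢ`, so all coefficients still have one sign
(`isBase_update`). Any two bases are conjugate under an isometry `φ` preserving `Φ`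
(`exists_conj_of_isBase`), so `φ ∘ α' = α ∘ σ` for a permutation `σ`. Since `-α j = ∑ mᵢ α'ᵢ`, the root
`φ (-α j)` has coefficients `m (σ⁻¹ i) ≤ m i`; both families have the same sum, so they coincide and
`φ (-α j) = α₀`. Hence `φ` permutes `{-α₀} ∪ Π` and sends `α j` to `-α₀`.

Conversely, if such a `φ` exists then `φ (-α₀) = α k` for some `k`, and applying `φ` to the relation
`-α₀ + ∑ mᵢ αᵢ = 0` and comparing coefficients of `α k` gives `1 = m j * m k`.

Conjugacy of bases is proved by choosing, among the finitely many isometries preserving `Φ`, one that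
maximises `⟪w γ, ρ⟫` with `γ`, `ρ` strictly dominant for `α'` and `α` respectively. Then `w γ` is strictly
dominant for `α`, so `w ∘ α'` and `α` define the same positive roots, and two bases with the same positive
roots agree up to order because the two transition matrices are nonnegative, integral and mutually inverse.
-/

open scoped RealInnerProductSpace

open scoped RealInnerProductSpace

/-- The reflection `s_a` in the hyperplane orthogonal to `a`. -/
noncomputable def reflMap {V : Type*} [NormedAddCommGroup V] [InnerProductSpace ℝ V]
    (a x : V) : V :=
  x - (2 * ⟪a, x⟫ / ⟪a, a⟫) • a

/-- A reduced irreducible crystallographic root system in `V`. -/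
structure IsRootSystem {V : Type*} [NormedAddCommGroup V] [InnerProductSpace ℝ V]
    (Φ : Set V) : Prop where
  finite : Φ.Finite
  spans : Submodule.span ℝ Φ = ⊤
  not_zero : (0 : V) ∉ Φ
  reduced : ∀ a ∈ Φ, ∀ t : ℝ, t • a ∈ Φ → t = 1 ∨ t = -1
  refl_mem : ∀ a ∈ Φ, ∀ b ∈ Φ, reflMap a b ∈ Φ
  crystallographic : ∀ a ∈ Φ, ∀ b ∈ Φ, ∃ k : ℤ, 2 * ⟪a, b⟫ / ⟪a, a⟫ = (k : ℝ)
  irreducible : ¬ ∃ Φ₁ Φ₂ : Set V, Φ₁.Nonempty ∧ Φ₂.Nonempty ∧ Φ₁ ∪ Φ₂ = Φ ∧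
    ∀ a ∈ Φ₁, ∀ b ∈ Φ₂, ⟪a, b⟫ = 0

/-- `α : Fin n → V` is a base (system of simple roots) of `Φ`. -/
structure IsBase {V : Type*} [NormedAddCommGroup V] [InnerProductSpace ℝ V]
    (Φ : Set V) {n : ℕ} (α : Fin n → V) : Prop where
  mem : ∀ i, α i ∈ Φ
  indep : LinearIndependent ℝ α
  spans : Submodule.span ℝ (Set.range α) = ⊤
  int_comb : ∀ β ∈ Φ, ∃ c : Fin n → ℤ,
    β = ∑ i, (c i : ℝ) • α i ∧ ((∀ i, 0 ≤ c i) ∨ (∀ i, c i ≤ 0))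

/-- `α₀ = ∑ mᵢ αᵢ` is the highest root of `Φ` w.r.t. the base `α`. -/
structure IsHighestRoot {V : Type*} [NormedAddCommGroup V] [InnerProductSpace ℝ V]
    (Φ : Set V) {n : ℕ} (α : Fin n → V) (m : Fin n → ℕ) (α₀ : V) : Prop where
  pos : ∀ i, 0 < m i
  mem : α₀ ∈ Φ
  eq : α₀ = ∑ i, (m i : ℝ) • α i
  highest : ∀ β ∈ Φ, ∀ c : Fin n → ℤ, β = ∑ i, (c i : ℝ) • α i → ∀ i, c i ≤ (m i : ℤ)

/-- The Weyl group of `Φ`, generated by the reflections in the roots. -/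
noncomputable def WeylGroup {V : Type*} [NormedAddCommGroup V] [InnerProductSpace ℝ V]
    (Φ : Set V) : Subgroup (V ≃ₗᵢ[ℝ] V) :=
  Subgroup.closure {w : V ≃ₗᵢ[ℝ] V | ∃ a ∈ Φ, ∀ x, w x = reflMap a x}

/-- The fundamental alcove. -/
def alcove {V : Type*} [NormedAddCommGroup V] [InnerProductSpace ℝ V]
    {n : ℕ} (α : Fin n → V) (α₀ : V) : Set V :=
  {x | (∀ i, 0 ≤ ⟪α i, x⟫) ∧ ⟪α₀, x⟫ ≤ 1}

/-- The coweight lattice `P^∨`. -/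
def coweightLattice {V : Type*} [NormedAddCommGroup V] [InnerProductSpace ℝ V]
    (Φ : Set V) : Set V :=
  {ω | ∀ a ∈ Φ, ∃ k : ℤ, ⟪ω, a⟫ = (k : ℝ)}

/-- The coroot lattice `Q^∨`: the `ℤ`-span of the coroots. -/
def corootLattice {V : Type*} [NormedAddCommGroup V] [InnerProductSpace ℝ V]
    (Φ : Set V) : Set V :=
  (Submodule.span ℤ ((fun a : V => (2 / ⟪a, a⟫) • a) '' Φ) : Set V)

/-- The extended affine Weyl group `W_ext = {t_γ ∘ w : γ ∈ P^∨, w ∈ W}` inside `E(V)`. -/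
noncomputable def extendedWeylGroup {V : Type*} [NormedAddCommGroup V] [InnerProductSpace ℝ V]
    (Φ : Set V) : Set (V ≃ᵃⁱ[ℝ] V) :=
  {ζ | ∃ γ ∈ coweightLattice Φ, ∃ w ∈ WeylGroup Φ, ∀ x, ζ x = w x + γ}

/-- The affine Weyl group `W_aff = {t_γ ∘ w : γ ∈ Q^∨, w ∈ W}` inside `E(V)`. -/
noncomputable def affineWeylGroup {V : Type*} [NormedAddCommGroup V] [InnerProductSpace ℝ V]
    (Φ : Set V) : Set (V ≃ᵃⁱ[ℝ] V) :=
  {ζ | ∃ γ ∈ corootLattice Φ, ∃ w ∈ WeylGroup Φ, ∀ x, ζ x = w x + γ}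

/-- The fundamental group `Ω`: the stabilizer of the alcove in `W_ext`. -/
noncomputable def fundGroup {V : Type*} [NormedAddCommGroup V] [InnerProductSpace ℝ V]
    (Φ : Set V) {n : ℕ} (α : Fin n → V) (α₀ : V) : Set (V ≃ᵃⁱ[ℝ] V) :=
  {ζ | ζ ∈ extendedWeylGroup Φ ∧ ζ '' alcove α α₀ = alcove α α₀}

/-- The Komrakov–Premet polytope. -/
def kpPolytope {V : Type*} [NormedAddCommGroup V] [InnerProductSpace ℝ V]
    {n : ℕ} (α : Fin n → V) (m : Fin n → ℕ) (α₀ : V) : Set V :=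
  {x ∈ alcove α α₀ | ∀ j, m j = 1 → ⟪α₀ + α j, x⟫ ≤ 1}

/-! ### Preliminaries on roots, reflections and bases -/

/-- Inner products with the members of a base can be prescribed arbitrarily. -/
lemma exists_inner_eq {V : Type*} [NormedAddCommGroup V] [InnerProductSpace ℝ V]
    [FiniteDimensional ℝ V] {Φ : Set V} {n : ℕ} {α : Fin n → V} (hα : IsBase Φ α)
    (t : Fin n → ℝ) : ∃ γ : V, ∀ i, ⟪γ, α i⟫ = t i := by
  let b := Module.Basis.mk hα.indep hα.spans.ge
  let f : V →ₗ[ℝ] ℝ := b.constr ℝ t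
  refine ⟨(InnerProductSpace.toDual ℝ V).symm (LinearMap.toContinuousLinearMap f), fun i => ?_⟩
  rw [InnerProductSpace.toDual_symm_apply]
  have h : b i = α i := by simp [b]
  rw [← h]
  simp [f]

/-- The reflection in a root, as a linear isometry. -/
lemma exists_isometry_reflMap {V : Type*} [NormedAddCommGroup V] [InnerProductSpace ℝ V]
    (a : V) : ∃ s : V ≃ₗᵢ[ℝ] V, ∀ x, s x = reflMap a x := by
  refine ⟨(ℝ ∙ a)ᗮ.reflection, fun x => ?_⟩
  rw [Submodule.reflection_orthogonal_apply, Submodule.reflection_singleton_apply, reflMap,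
    real_inner_self_eq_norm_sq]
  simp only [RCLike.ofReal_real_eq_id, id]
  module

lemma finite_stabilizer {V : Type*} [NormedAddCommGroup V] [InnerProductSpace ℝ V]
    {Φ : Set V} (hΦ : IsRootSystem Φ) :
    {w : V ≃ₗᵢ[ℝ] V | ∀ a ∈ Φ, w a ∈ Φ}.Finite := by
  have := hΦ.finite.to_subtype
  -- An isometry is determined by its restriction to the spanning set `Φ`.
  let r : {w : V ≃ₗᵢ[ℝ] V | ∀ a ∈ Φ, w a ∈ Φ} → (Φ → Φ) := fun w a => ⟨w.1 a, w.2 a a.2⟩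
  refine Finite.of_injective r fun w w' h => Subtype.ext ?_
  have hlin : w.1.toLinearEquiv.toLinearMap = w'.1.toLinearEquiv.toLinearMap :=
    LinearMap.ext_on hΦ.spans fun a ha => congrArg Subtype.val (congrFun h ⟨a, ha⟩)
  exact LinearIsometryEquiv.ext fun x => LinearMap.congr_fun hlin x

lemma neg_mem_of_mem {V : Type*} [NormedAddCommGroup V] [InnerProductSpace ℝ V]
    {Φ : Set V} (hΦ : IsRootSystem Φ) {a : V} (ha : a ∈ Φ) : -a ∈ Φ := by
  have hne : ⟪a, a⟫ ≠ 0 := inner_self_ne_zero.2 fun h => hΦ.not_zero (h ▸ ha)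
  have := hΦ.refl_mem a ha a ha
  rwa [reflMap, mul_div_assoc, div_self hne, mul_one, two_smul, sub_add_cancel_left] at this

/-- A vector with positive inner product with every member of a base is regular, and a root
with positive inner product with it has nonnegative coefficients. -/
lemma coeff_sign {V : Type*} [NormedAddCommGroup V] [InnerProductSpace ℝ V]
    {Φ : Set V} (hΦ : IsRootSystem Φ) {n : ℕ} {α : Fin n → V} (hα : IsBase Φ α)
    {γ : V} (hγ : ∀ i, 0 < ⟪γ, α i⟫) {β : V} (hβ : β ∈ Φ) :
    ⟪γ, β⟫ ≠ 0 ∧ (0 < ⟪γ, β⟫ → ∃ c : Fin n → ℤ, β = ∑ i, (c i : ℝ) • α i ∧ ∀ i, 0 ≤ c i) := by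
  obtain ⟨c, hc, hs⟩ := hα.int_comb β hβ
  have hin : ⟪γ, β⟫ = ∑ i, (c i : ℝ) * ⟪γ, α i⟫ := by
    rw [hc, inner_sum]; simp [inner_smul_right]
  have hne : ∃ i, c i ≠ 0 := by
    by_contra! h
    exact hΦ.not_zero (by simpa [hc, h] using hβ)
  obtain ⟨k, hk⟩ := hne
  rcases hs with hs | hs
  · refine ⟨ne_of_gt ?_, fun _ => ⟨c, hc, hs⟩⟩
    rw [hin]
    refine Finset.sum_pos' (fun i _ => mul_nonneg (by exact_mod_cast hs i) (hγ i).le)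
      ⟨k, Finset.mem_univ _, mul_pos ?_ (hγ k)⟩
    exact_mod_cast lt_of_le_of_ne (hs k) hk.symm
  · have : ⟪γ, β⟫ < 0 := by
      rw [hin]
      refine Finset.sum_neg' (fun i _ => mul_nonpos_of_nonpos_of_nonneg
        (by exact_mod_cast hs i) (hγ i).le)
        ⟨k, Finset.mem_univ _, mul_neg_of_neg_of_pos ?_ (hγ k)⟩
      exact_mod_cast lt_of_le_of_ne (hs k) hk
    exact ⟨this.ne, fun h => absurd h this.not_gt⟩

/-! ### Conjugacy of bases -/

/-- Two families that express each other with nonnegative integer coefficients, one of them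
linearly independent, agree up to order. -/
lemma exists_perm_of_nonneg {V : Type*} [AddCommGroup V] [Module ℝ V] {n : ℕ}
    {α β : Fin n → V} (hind : LinearIndependent ℝ α)
    (h1 : ∀ i, ∃ d : Fin n → ℤ, α i = ∑ l, (d l : ℝ) • β l ∧ ∀ l, 0 ≤ d l)
    (h2 : ∀ l, ∃ c : Fin n → ℤ, β l = ∑ k, (c k : ℝ) • α k ∧ ∀ k, 0 ≤ c k) :
    ∃ σ : Equiv.Perm (Fin n), ∀ l, β l = α (σ l) := by
  choose d hd hd0 using h1
  choose c hc hc0 using h2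
  have key : ∀ i k, ∑ l, d i l * c l k = if k = i then 1 else 0 := by
    intro i
    have h : ∑ k, ((∑ l, d i l * c l k : ℤ) : ℝ) • α k
        = ∑ k, ((if k = i then 1 else 0 : ℤ) : ℝ) • α k := by
      have e : ∑ k, ((if k = i then 1 else 0 : ℤ) : ℝ) • α k = α i := by
        simp [ite_smul]
      rw [e]
      conv_rhs => rw [hd i]
      simp_rw [Int.cast_sum, Finset.sum_smul]
      rw [Finset.sum_comm]
      refine Finset.sum_congr rfl fun l _ => ?_
      rw [hc l, Finset.smul_sum]
      simp [mul_smul]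
    intro k
    have := Fintype.linearIndependent_iff.1 hind
      (fun k => ((∑ l, d i l * c l k : ℤ) : ℝ) - ((if k = i then 1 else 0 : ℤ) : ℝ))
      (by simp only [sub_smul, Finset.sum_sub_distrib]; rw [h, sub_self]) k
    exact_mod_cast sub_eq_zero.1 this
  have hex : ∀ i, ∃ l, β l = α i := by
    intro i
    have hii := key i i
    rw [if_pos rfl] at hii
    obtain ⟨l, -, hl⟩ := Finset.exists_ne_zero_of_sum_ne_zero (hii.trans_ne one_ne_zero)
    have hle : d i l * c l i ≤ 1 := by
      rw [← hii]
      exact Finset.single_le_sum (f := fun l => d i l * c l i)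
        (fun l _ => mul_nonneg (hd0 i l) (hc0 l i)) (Finset.mem_univ l)
    have hdl : d i l ≠ 0 := left_ne_zero_of_mul hl
    have hcl : c l i ≠ 0 := right_ne_zero_of_mul hl
    have h1 : c l i = 1 := by
      have := hd0 i l
      have := hc0 l i
      have : 1 ≤ d i l := by omega
      have : 1 ≤ c l i := by omega
      nlinarith
    have h0 : ∀ k, k ≠ i → c l k = 0 := by
      intro k hk
      have := key i k
      rw [if_neg hk, Finset.sum_eq_zero_iff_of_nonneg
        (fun l _ => mul_nonneg (hd0 i l) (hc0 l k))] at this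
      exact (mul_eq_zero.1 (this l (Finset.mem_univ l))).resolve_left hdl
    refine ⟨l, ?_⟩
    rw [hc l, Finset.sum_eq_single i (fun k _ hk => by simp [h0 k hk]) (by simp)]
    simp [h1]
  choose τ hτ using hex
  have hinj : Function.Injective τ := fun a b hab =>
    hind.injective (by rw [← hτ a, ← hτ b, hab])
  let e := Equiv.ofBijective τ (Finite.injective_iff_bijective.1 hinj)
  refine ⟨e.symm, fun l => ?_⟩
  rw [← hτ]
  exact congrArg β (e.apply_symm_apply l).symm

/-- Any two bases of a root system are conjugate under an isometry preserving the roots. -/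
lemma exists_conj_of_isBase {V : Type*} [NormedAddCommGroup V] [InnerProductSpace ℝ V]
    [FiniteDimensional ℝ V] {Φ : Set V} (hΦ : IsRootSystem Φ) {n : ℕ} {α α' : Fin n → V}
    (hα : IsBase Φ α) (hα' : IsBase Φ α') :
    ∃ φ : V ≃ₗᵢ[ℝ] V, (∀ a ∈ Φ, φ a ∈ Φ) ∧
      ∃ σ : Equiv.Perm (Fin n), ∀ i, φ (α' i) = α (σ i) := by
  obtain ⟨γ, hγ⟩ := exists_inner_eq hα' (fun _ => 1)
  obtain ⟨ρ, hρ⟩ := exists_inner_eq hα (fun _ => 1)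
  have hγ' : ∀ i, 0 < ⟪γ, α' i⟫ := fun i => by rw [hγ]; exact one_pos
  obtain ⟨w, hw, hmax⟩ := Set.exists_max_image _ (fun w : V ≃ₗᵢ[ℝ] V => ⟪w γ, ρ⟫)
    (finite_stabilizer hΦ) ⟨LinearIsometryEquiv.refl ℝ V, fun a ha => ha⟩
  -- `w` maps the finite set `Φ` onto itself.
  have hsurj : ∀ b ∈ Φ, ∃ a ∈ Φ, w a = b := by
    have him : w '' Φ = Φ := Set.eq_of_subset_of_ncard_le (Set.image_subset_iff.2 hw)
      (Set.ncard_image_of_injective Φ w.injective).ge hΦ.finite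
    intro b hb
    rwa [← him] at hb
  have hreg : ∀ b ∈ Φ, ⟪w γ, b⟫ ≠ 0 := by
    intro b hb
    obtain ⟨a, ha, rfl⟩ := hsurj b hb
    rw [w.inner_map_map]
    exact (coeff_sign hΦ hα' hγ' ha).1
  -- Maximality against `s_{αᵢ} ∘ w` forces `w γ` to be dominant.
  have hdom : ∀ i, 0 < ⟪w γ, α i⟫ := by
    intro i
    obtain ⟨s, hs⟩ := exists_isometry_reflMap (α i)
    have hle := hmax (w.trans s) (fun a ha => by
      simpa [hs] using hΦ.refl_mem _ (hα.mem i) _ (hw a ha))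
    have hne : α i ≠ 0 := fun h => hΦ.not_zero (h ▸ hα.mem i)
    have hpos : 0 < ⟪α i, α i⟫ := real_inner_self_pos.2 hne
    simp only [LinearIsometryEquiv.trans_apply, hs, reflMap, inner_sub_left,
      real_inner_smul_left] at hle
    rw [real_inner_comm ρ (α i), hρ i, mul_one, sub_le_self_iff, real_inner_comm] at hle
    refine lt_of_le_of_ne ?_ (hreg _ (hα.mem i)).symm
    by_contra! h
    exact (div_neg_of_neg_of_pos (by linarith) hpos).not_ge hle
  refine ⟨w, hw, exists_perm_of_nonneg hα.indep (fun i => ?_) (fun l => ?_)⟩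
  · obtain ⟨a, ha, hai⟩ := hsurj _ (hα.mem i)
    have hpos : 0 < ⟪γ, a⟫ := by rw [← w.inner_map_map, hai]; exact hdom i
    obtain ⟨c, hc, h0⟩ := (coeff_sign hΦ hα' hγ' ha).2 hpos
    exact ⟨c, by rw [← hai, hc]; simp, h0⟩
  · refine (coeff_sign hΦ hα hdom (hw _ (hα'.mem l))).2 ?_
    rw [w.inner_map_map]
    exact hγ' l

/-! ### Exchanging a minuscule root with the lowest root -/

lemma isBase_update {V : Type*} [NormedAddCommGroup V] [InnerProductSpace ℝ V]
    [FiniteDimensional ℝ V] {Φ : Set V} (hΦ : IsRootSystem Φ) {n : ℕ} {α : Fin n → V}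
    (hα : IsBase Φ α) {m : Fin n → ℕ} {α₀ : V} (h₀ : IsHighestRoot Φ α m α₀) {j : Fin n}
    (hj : m j = 1) : IsBase Φ (Function.update α j (-α₀)) := by
  have hneg : ∀ a ∈ Φ, -a ∈ Φ := fun _ => neg_mem_of_mem hΦ
  -- Rewriting a combination of `α` in terms of the updated family.
  have hre : ∀ c : Fin n → ℝ, ∑ i, c i • α i =
      ∑ i, (if i = j then -c j else c i - c j * m i) • Function.update α j (-α₀) i := by
    intro c
    rw [← Finset.add_sum_erase _ _ (Finset.mem_univ j), ← Finset.add_sum_erase _ _ (Finset.mem_univ j)]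
    have e1 : ∑ i ∈ Finset.univ.erase j,
        (if i = j then -c j else c i - c j * m i) • Function.update α j (-α₀) i
        = ∑ i ∈ Finset.univ.erase j, c i • α i
          - c j • ∑ i ∈ Finset.univ.erase j, (m i : ℝ) • α i := by
      rw [Finset.smul_sum, ← Finset.sum_sub_distrib]
      refine Finset.sum_congr rfl fun i hi => ?_
      have hij := Finset.ne_of_mem_erase hi
      rw [if_neg hij, Function.update_of_ne hij, sub_smul, mul_smul]
    have e2 : α₀ = α j + ∑ i ∈ Finset.univ.erase j, (m i : ℝ) • α i := by
      rw [h₀.eq, ← Finset.add_sum_erase _ _ (Finset.mem_univ j), hj, Nat.cast_one, one_smul]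
    rw [e1, if_pos rfl, Function.update_self]
    nth_rewrite 1 [e2]
    module
  have hspan : Submodule.span ℝ (Set.range (Function.update α j (-α₀))) = ⊤ := by
    rw [eq_top_iff, ← hα.spans, Submodule.span_le]
    rintro _ ⟨k, rfl⟩
    have := hre (Pi.single k 1)
    rw [Finset.sum_eq_single k (by intro i _ hi; simp [hi]) (by simp), Pi.single_eq_same,
      one_smul] at this
    rw [this]
    exact Submodule.sum_mem _ fun i _ =>
      Submodule.smul_mem _ _ (Submodule.subset_span ⟨i, rfl⟩)
  refine ⟨fun i => ?_, ?_, hspan, fun β hβ => ?_⟩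
  · rcases eq_or_ne i j with rfl | hi
    · rw [Function.update_self]; exact hneg _ h₀.mem
    · rw [Function.update_of_ne hi]; exact hα.mem i
  · refine linearIndependent_of_top_le_span_of_card_eq_finrank hspan.ge ?_
    exact (Module.finrank_eq_card_basis (Module.Basis.mk hα.indep hα.spans.ge)).symm
  · obtain ⟨c, hc, hs⟩ := hα.int_comb β hβ
    refine ⟨fun i => if i = j then -c j else c i - c j * m i, ?_, ?_⟩
    · rw [hc, hre]
      refine Finset.sum_congr rfl fun i _ => ?_
      split_ifs with h <;> simp [h]
    · have hup := h₀.highest β hβ c hc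
      have hlo := h₀.highest (-β) (hneg β hβ) (-c) (by rw [hc]; simp)
      have hj1 := hup j
      have hj2 := hlo j
      simp only [hj, Pi.neg_apply] at hj1 hj2
      have hcj : c j = 0 ∨ c j = 1 ∨ c j = -1 := by push_cast at hj1 hj2; omega
      rcases hcj with h | h | h
      · simpa only [h, zero_mul, sub_zero, neg_zero] using hs.imp
          (fun hs i => by split_ifs; exacts [le_rfl, hs i])
          (fun hs i => by split_ifs; exacts [le_rfl, hs i])
      · right
        intro i
        have := hup i
        simp only [h]
        split_ifs <;> omega
      · left
        intro i
        have := hlo i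
        simp only [Pi.neg_apply] at this
        simp only [h]
        split_ifs <;> omega

theorem statement_3
    {V : Type*} [NormedAddCommGroup V] [InnerProductSpace ℝ V] [FiniteDimensional ℝ V]
    (Φ : Set V) (hΦ : IsRootSystem Φ)
    {n : ℕ} (α : Fin n → V) (hα : IsBase Φ α)
    (m : Fin n → ℕ) (α₀ : V) (h₀ : IsHighestRoot Φ α m α₀)
    (j : Fin n) :
    m j = 1 ↔ ∃ φ : V ≃ₗᵢ[ℝ] V,
      ⇑φ '' insert (-α₀) (Set.range α) = insert (-α₀) (Set.range α) ∧
      φ (α j) = -α₀ := by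
  constructor
  · intro hj
    have hb := isBase_update hΦ hα h₀ hj
    obtain ⟨φ, hφ, σ, hσ⟩ := exists_conj_of_isBase hΦ hα hb
    have hneg : φ (-α j) = ∑ i, (m (σ.symm i) : ℝ) • α i := by
      have e : -α j = ∑ i, (m i : ℝ) • Function.update α j (-α₀) i := by
        have e1 : ∑ i ∈ Finset.univ.erase j, (m i : ℝ) • Function.update α j (-α₀) i
            = ∑ i ∈ Finset.univ.erase j, (m i : ℝ) • α i :=
          Finset.sum_congr rfl fun i hi => by
            rw [Function.update_of_ne (Finset.ne_of_mem_erase hi)]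
        have e2 : α₀ = α j + ∑ i ∈ Finset.univ.erase j, (m i : ℝ) • α i := by
          rw [h₀.eq, ← Finset.add_sum_erase _ _ (Finset.mem_univ j), hj, Nat.cast_one, one_smul]
        rw [← Finset.add_sum_erase _ _ (Finset.mem_univ j), e1, Function.update_self, hj,
          Nat.cast_one, one_smul]
        nth_rewrite 1 [e2]
        abel
      rw [e, map_sum, ← Equiv.sum_comp σ (fun i => (m (σ.symm i) : ℝ) • α i)]
      simp [hσ]
    have hmem : φ (-α j) ∈ Φ := hφ _ (neg_mem_of_mem hΦ (hα.mem j))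
    have hle : ∀ i ∈ Finset.univ, m (σ.symm i) ≤ m i := fun i _ => by
      exact_mod_cast h₀.highest _ hmem (fun i => (m (σ.symm i) : ℤ)) (by simpa using hneg) i
    -- Equal sums turn the termwise inequalities into equalities.
    have heq := (Finset.sum_eq_sum_iff_of_le hle).1 (Equiv.sum_comp σ.symm m)
    have hj0 : φ (α j) = -α₀ := by
      rw [← neg_eq_iff_eq_neg, ← map_neg, hneg, h₀.eq]
      exact Finset.sum_congr rfl fun i hi => by rw [heq i hi]
    refine ⟨φ, ?_, hj0⟩
    have hset : insert (-α₀) (Set.range α)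
        = insert (α j) (Set.range (Function.update α j (-α₀))) := by
      ext x
      simp only [Set.mem_insert_iff, Set.mem_range]
      constructor
      · rintro (rfl | ⟨i, rfl⟩)
        · exact Or.inr ⟨j, Function.update_self ..⟩
        · rcases eq_or_ne i j with rfl | hi
          · exact Or.inl rfl
          · exact Or.inr ⟨i, Function.update_of_ne hi ..⟩
      · rintro (rfl | ⟨i, rfl⟩)
        · exact Or.inr ⟨j, rfl⟩
        · rcases eq_or_ne i j with rfl | hi
          · exact Or.inl (Function.update_self ..)
          · exact Or.inr ⟨i, (Function.update_of_ne hi ..).symm⟩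
    have hrange : φ '' Set.range (Function.update α j (-α₀)) = Set.range α := by
      rw [← Set.range_comp, ← σ.surjective.range_comp α]
      exact congrArg Set.range (funext hσ)
    conv_lhs => rw [hset, Set.image_insert_eq, hj0, hrange]
  · rintro ⟨φ, hφ, hφj⟩
    have hmaps : ∀ x ∈ insert (-α₀) (Set.range α), φ x ∈ insert (-α₀) (Set.range α) :=
      fun x hx => hφ ▸ Set.mem_image_of_mem φ hx
    have hnot : ∀ i, α i ≠ -α₀ := by
      intro i hi
      obtain ⟨γ, hγ⟩ := exists_inner_eq hα (fun _ => 1)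
      have h1 := hγ i
      rw [hi, h₀.eq, inner_neg_right, inner_sum] at h1
      simp only [inner_smul_right, hγ, mul_one] at h1
      have : (0 : ℝ) ≤ ∑ i, (m i : ℝ) := Finset.sum_nonneg fun i _ => Nat.cast_nonneg _
      linarith
    obtain ⟨k, hk⟩ : ∃ k, α k = φ (-α₀) := by
      rcases hmaps (-α₀) (Set.mem_insert _ _) with h | h
      · exact absurd (φ.injective (hφj.trans h.symm)) (hnot j)
      · exact h
    -- `⟪γ, ·⟫` reads off the coefficient of `α k`.
    obtain ⟨γ, hγ⟩ := exists_inner_eq hα (Pi.single k 1)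
    have hγ0 : ⟪γ, α₀⟫ = m k := by
      rw [h₀.eq, inner_sum]
      simp [inner_smul_right, hγ, Pi.single_apply]
    have hother : ∀ i, i ≠ j → ⟪γ, φ (α i)⟫ = 0 := by
      intro i hi
      rcases hmaps (α i) (Set.mem_insert_of_mem _ ⟨i, rfl⟩) with h | ⟨l, hl⟩
      · exact absurd (hα.indep.injective (φ.injective (h.trans hφj.symm))) hi
      · have hlk : l ≠ k := by
          rintro rfl
          exact hnot i (φ.injective (hl.symm.trans hk))
        rw [← hl, hγ, Pi.single_eq_of_ne hlk]
    have h1 : ⟪γ, φ (-α₀)⟫ = 1 := by rw [← hk, hγ, Pi.single_eq_same]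
    have h2 : ⟪γ, φ (-α₀)⟫ = (m j : ℝ) * m k := by
      rw [map_neg, h₀.eq, map_sum, inner_neg_right, inner_sum, Finset.sum_eq_single j]
      · rw [map_smul, inner_smul_right, hφj, inner_neg_right, hγ0]; ring
      · intro i _ hi
        rw [map_smul, inner_smul_right, hother i hi, mul_zero]
      · simp
    have h3 : m j * m k = 1 := by exact_mod_cast h2.symm.trans h1
    exact Nat.eq_one_of_mul_eq_one_right h3
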